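/- Let k ≥ 1 be an integer, let f : ℝ → ℝ be k-times continuously differentiable on [a, b] with a < b, let x₀ ∈ (a, b), and suppose f^{(k)} is monotonically increasing on [a, b]. Then for every x ∈ [a, b] with x ≠ x₀, R_{k-1}(a; f, x₀)/(a - x₀)^k ≤ R_{k-1}(x; f, x₀)/(x - x₀)^k ≤ R_{k-1}(b; f, x₀)/(b - x₀)^k. Consequently the infimum of R_{k-1}(x; f, x₀)/(x - x₀)^k over x ∈ [a, b] \ {x₀} equals R_{k-1}(a; f, x₀)/(a - x₀)^k, and the supremum equals R_{k-1}(b; f, x₀)/(b - x₀)^k. -/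

import Mathlib

/-!
The integral form of the Taylor remainder, after the substitution `t = x₀ + s (x - x₀)`, reads
`R_{k-1}(x; f, x₀) / (x - x₀)^k = ∫ s in 0..1, (1 - s)^(k-1) / (k-1)! * f⁽ᵏ⁾(x₀ + s (x - x₀))`
(`taylorRemainder_div_eq_integral`). The weight is nonnegative and the argument of `f⁽ᵏ⁾` is
increasing in `x`, so the ratio is increasing in `x` when `f⁽ᵏ⁾` is (`integral_weight_mono`).
The infimum and the supremum are therefore attained at the endpoints `a` and `b`, both of which
differ from `x₀`.
-/

/-- Degree `k-1` Taylor remainder: `R_{k-1}(x; f, x₀) = f x - ∑_{i=0}^{k-1} f⁽ⁱ⁾(x₀)(x-x₀)^i/i!`. -/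
noncomputable def taylorRemainder (f : ℝ → ℝ) (x₀ : ℝ) (k : ℕ) (x : ℝ) : ℝ :=
  f x - ∑ i ∈ Finset.range k, iteratedDeriv i f x₀ * (x - x₀) ^ i / (i.factorial : ℝ)

open Set

/-- The value of the derivatives of `f` at the endpoint `x` of the interval of integration, where
`iteratedDeriv` and `iteratedDerivWithin` may disagree, plays no role in the integral. -/
theorem taylorRemainder_div_eq_integral {n : ℕ} {f : ℝ → ℝ} {a b x₀ x : ℝ}
    (hx₀ : x₀ ∈ Ioo a b) (hf : ContDiffOn ℝ (n + 1 : ℕ) f (Icc a b))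
    (hx : x ∈ Icc a b) (hne : x ≠ x₀) :
    taylorRemainder f x₀ (n + 1) x / (x - x₀) ^ (n + 1) =
      ∫ s in (0 : ℝ)..1, (1 - s) ^ n / (n.factorial : ℝ) *
        iteratedDeriv (n + 1) f (x₀ + s * (x - x₀)) := by
  have hsub : uIcc x₀ x ⊆ Icc a b := uIcc_subset_Icc (Ioo_subset_Icc_self hx₀) hx
  have hU : UniqueDiffOn ℝ (uIcc x₀ x) := uniqueDiffOn_uIcc hne.symm
  have hint : ∀ t ∈ Ioo a b, ContDiffAt ℝ (n + 1 : ℕ) f t := fun t ht =>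
    hf.contDiffAt (Icc_mem_nhds ht.1 ht.2)
  have hpoly : taylorRemainder f x₀ (n + 1) x = f x - taylorWithinEval f n (uIcc x₀ x) x₀ x := by
    rw [taylorRemainder, taylor_within_apply]
    congr 1
    refine Finset.sum_congr rfl fun i hi => ?_
    have hi' : i ≤ n + 1 := (Finset.mem_range.1 hi).le
    rw [iteratedDerivWithin_eq_iteratedDeriv hU ((hint x₀ hx₀).of_le (by exact_mod_cast hi'))
      left_mem_uIcc, smul_eq_mul]
    ring
  have hcongr : (∫ t in x₀..x, ((x - t) ^ n / (n.factorial : ℝ)) •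
        iteratedDerivWithin (n + 1) f (uIcc x₀ x) t) =
      ∫ t in x₀..x, (x - t) ^ n / (n.factorial : ℝ) * iteratedDeriv (n + 1) f t := by
    refine intervalIntegral.integral_congr_uIoo fun t ht => ?_
    have ht' : t ∈ Ioo a b := by
      obtain ⟨h1, h2⟩ := ht
      exact ⟨(le_min hx₀.1.le hx.1).trans_lt h1, h2.trans_le (max_le hx₀.2.le hx.2)⟩
    simp only [smul_eq_mul]
    rw [iteratedDerivWithin_eq_iteratedDeriv hU (hint t ht') (Ioo_subset_Icc_self ht)]
  have hd : x - x₀ ≠ 0 := sub_ne_zero.2 hne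
  rw [hpoly, taylor_integral_remainder (hf.mono hsub), hcongr]
  have hsubst := intervalIntegral.mul_integral_comp_add_mul (a := 0) (b := 1)
    (f := fun t => (x - t) ^ n / (n.factorial : ℝ) * iteratedDeriv (n + 1) f t) (x - x₀) x₀
  rw [mul_zero, add_zero, mul_one, add_sub_cancel] at hsubst
  rw [← hsubst, pow_succ', mul_div_mul_left _ _ hd, ← intervalIntegral.integral_div]
  refine intervalIntegral.integral_congr fun s _ => ?_
  have : x - (x₀ + (x - x₀) * s) = (x - x₀) * (1 - s) := by ring
  simp only [this, mul_pow]
  rw [mul_comm (x - x₀) s]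
  field_simp

theorem integral_weight_mono {n : ℕ} {D : ℝ → ℝ} {a b x₀ y z : ℝ} (hx₀ : x₀ ∈ Icc a b)
    (hD : MonotoneOn D (Icc a b)) (hy : y ∈ Icc a b) (hz : z ∈ Icc a b) (hyz : y ≤ z) :
    (∫ s in (0 : ℝ)..1, (1 - s) ^ n / (n.factorial : ℝ) * D (x₀ + s * (y - x₀))) ≤
      ∫ s in (0 : ℝ)..1, (1 - s) ^ n / (n.factorial : ℝ) * D (x₀ + s * (z - x₀)) := by
  have hmem : ∀ w ∈ Icc a b, ∀ s ∈ Icc (0 : ℝ) 1, x₀ + s * (w - x₀) ∈ Icc a b :=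
    fun w hw s hs => (convex_Icc a b).add_smul_sub_mem hx₀ hw hs
  have hI : ∀ w ∈ Icc a b, IntervalIntegrable
      (fun s => (1 - s) ^ n / (n.factorial : ℝ) * D (x₀ + s * (w - x₀)))
      MeasureTheory.volume 0 1 := by
    intro w hw
    refine IntervalIntegrable.continuousOn_mul ?_ (by fun_prop)
    have h01 : uIcc (0 : ℝ) 1 = Icc 0 1 := uIcc_of_le zero_le_one
    -- The segment from `x₀` to `w` is traversed upwards or downwards.
    rcases le_total x₀ w with h | h
    · refine MonotoneOn.intervalIntegrable fun s hs t ht hst => ?_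
      rw [h01] at hs ht
      refine hD (hmem w hw s hs) (hmem w hw t ht) ?_
      have := mul_le_mul_of_nonneg_right hst (sub_nonneg.2 h)
      linarith
    · refine AntitoneOn.intervalIntegrable fun s hs t ht hst => ?_
      rw [h01] at hs ht
      refine hD (hmem w hw t ht) (hmem w hw s hs) ?_
      have := mul_le_mul_of_nonpos_right hst (sub_nonpos.2 h)
      linarith
  refine intervalIntegral.integral_mono_on zero_le_one (hI y hy) (hI z hz) fun s hs => ?_
  have hw : 0 ≤ (1 - s) ^ n / (n.factorial : ℝ) :=
    div_nonneg (pow_nonneg (sub_nonneg.2 hs.2) n) (Nat.cast_nonneg _)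
  refine mul_le_mul_of_nonneg_left (hD (hmem y hy s hs) (hmem z hz s hs) ?_) hw
  have := mul_le_mul_of_nonneg_left (sub_le_sub_right hyz x₀) hs.1
  linarith

/-- if `f` is `C^k` on `[a,b]` and `f⁽ᵏ⁾` is monotonically increasing on `[a,b]`,
then for `x₀ ∈ (a,b)` the ratio `R_{k-1}(x; f, x₀)/(x-x₀)^k` is bounded below by its value at `a`
and above by its value at `b`, so the sharp degree-`k` Taylor polynomial enclosure of `f` at `x₀`
over `[a,b]` is `[R_{k-1}(a)/(a-x₀)^k, R_{k-1}(b)/(b-x₀)^k]`. -/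
theorem sharp_enclosure_of_monotone (k : ℕ) (hk : 1 ≤ k) (f : ℝ → ℝ) (a b x₀ : ℝ) (hab : a < b)
    (hx₀ : x₀ ∈ Set.Ioo a b)
    (hf : ContDiffOn ℝ (k : ℕ∞) f (Set.Icc a b))
    (hmono : MonotoneOn (iteratedDeriv k f) (Set.Icc a b)) :
    (∀ x ∈ Set.Icc a b, x ≠ x₀ →
        taylorRemainder f x₀ k a / (a - x₀) ^ k ≤ taylorRemainder f x₀ k x / (x - x₀) ^ k ∧
        taylorRemainder f x₀ k x / (x - x₀) ^ k ≤ taylorRemainder f x₀ k b / (b - x₀) ^ k) ∧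
    sInf ((fun x => taylorRemainder f x₀ k x / (x - x₀) ^ k) '' (Set.Icc a b \ {x₀})) =
      taylorRemainder f x₀ k a / (a - x₀) ^ k ∧
    sSup ((fun x => taylorRemainder f x₀ k x / (x - x₀) ^ k) '' (Set.Icc a b \ {x₀})) =
      taylorRemainder f x₀ k b / (b - x₀) ^ k := by
  obtain ⟨n, rfl⟩ : ∃ n, k = n + 1 := ⟨k - 1, by omega⟩
  have hf' : ContDiffOn ℝ (n + 1 : ℕ) f (Icc a b) := by exact_mod_cast hf
  have ha : a ∈ Icc a b := left_mem_Icc.2 hab.le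
  have hb : b ∈ Icc a b := right_mem_Icc.2 hab.le
  have hmain : ∀ y ∈ Icc a b, y ≠ x₀ → ∀ z ∈ Icc a b, z ≠ x₀ → y ≤ z →
      taylorRemainder f x₀ (n + 1) y / (y - x₀) ^ (n + 1) ≤
        taylorRemainder f x₀ (n + 1) z / (z - x₀) ^ (n + 1) := by
    intro y hy hy' z hz hz' hyz
    rw [taylorRemainder_div_eq_integral hx₀ hf' hy hy',
      taylorRemainder_div_eq_integral hx₀ hf' hz hz']
    exact integral_weight_mono (Ioo_subset_Icc_self hx₀) hmono hy hz hyz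
  have hlow : ∀ x ∈ Icc a b, x ≠ x₀ → _ := fun x hx hne => hmain a ha hx₀.1.ne x hx hne hx.1
  have hup : ∀ x ∈ Icc a b, x ≠ x₀ → _ := fun x hx hne => hmain x hx hne b hb hx₀.2.ne' hx.2
  refine ⟨fun x hx hne => ⟨hlow x hx hne, hup x hx hne⟩, IsLeast.csInf_eq ⟨?_, ?_⟩,
    IsGreatest.csSup_eq ⟨?_, ?_⟩⟩
  · exact ⟨a, ⟨ha, hx₀.1.ne⟩, rfl⟩
  · rintro _ ⟨x, ⟨hx, hne⟩, rfl⟩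
    exact hlow x hx hne
  · exact ⟨b, ⟨hb, hx₀.2.ne'⟩, rfl⟩
  · rintro _ ⟨x, ⟨hx, hne⟩, rfl⟩
    exact hup x hx hne
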